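/- arXiv:2312.01378 — 2 statements merged into one kernel-verified Lean document; each statement's English description precedes it below -/
import Mathlib

section
/- An induced subgraph inclusion of directed graphs f : A ↪ X is a long cofibration if and only if the induced inclusion of preorders Pre(f) : Pre(A) → Pre(X) is a Dwyer morphism. -/
/-!
Both notions say that `A` is a lower set of the reachability preorder such that every vertex `x`
above some vertex of `A` has a greatest vertex of `A` below it. For a long cofibration this vertex
is `π x`. For a Dwyer morphism it is `p x`: if `a ≤ x` with `a ∈ A`, then `a = p a ≤ p x ≤ x`.
Conversely, choosing these greatest vertices defines a monotone retraction on the upper closure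
of `A`. Fullness of the inclusion of preorders is automatic for a lower set, because every vertex
on a path ending in `A` lies in `A`.
-/

/-- `u` reaches `v` in the digraph `(V, E)`. -/
def Reaches {V : Type} (E : V → V → Prop) (u v : V) : Prop :=
  Relation.ReflTransGen E u v

/-- The induced subgraph inclusion `A ↪ X` (where `X` is the digraph `(V, E)` and `A` is an
induced subgraph, given by a set of vertices) is a *long cofibration* if
(1) no vertex of `X` outside `A` reaches a vertex of `A`, and
(2) for each vertex `x` of the reach of `A` (the set of vertices reachable from some vertex
of `A`) there is a vertex `π x ∈ A` such that for every `a ∈ A`, `a` reaches `x` in `X` iff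
`a` reaches `π x` in `X`. -/
def IsLongCofib {V : Type} (E : V → V → Prop) (A : Set V) : Prop :=
  (∀ x, x ∉ A → ∀ a ∈ A, ¬ Reaches E x a) ∧
  (∀ x, (∃ a ∈ A, Reaches E a x) →
    ∃ π ∈ A, ∀ a ∈ A, (Reaches E a x ↔ Reaches E a π))

/-- The inclusion `Pre(A) → Pre(X)` induced on reachability preorders by an induced subgraph
inclusion `A ↪ X` is a *Dwyer morphism* if it is the inclusion of a sub-preorder, i.e.
reachability within `A` agrees with reachability within `X` between vertices of `A`
(fullness), and it factors through a sub-preorder `U` such that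
(1) if `x ≤ y` in `Pre(X)` with `y ∈ A` then `x ∈ A`;
(2) `U` is upwards closed in `Pre(X)`;
(3) there is a monotone retraction `p : U → A` with `p u ≤ u` for all `u ∈ U`. -/
def PreIsDwyer {V : Type} (E : V → V → Prop) (A : Set V) : Prop :=
  (∀ a b : A, Reaches (fun u v : A => E u v) a b ↔ Reaches E a b) ∧
  (∀ x, ∀ a ∈ A, Reaches E x a → x ∈ A) ∧
  ∃ U : Set V, A ⊆ U ∧
    (∀ u ∈ U, ∀ x, Reaches E u x → x ∈ U) ∧
    ∃ p : U → A,
      (∀ u v : U, Reaches E u v → Reaches E (p u) (p v)) ∧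
      (∀ (a : V) (ha : a ∈ A) (hu : a ∈ U), (p ⟨a, hu⟩ : V) = a) ∧
      (∀ u : U, Reaches E (p u) u)

section Preorder

variable {α : Type*} [Preorder α] {A U : Set α}

theorem isGreatest_inter_Iic_iff {x m : α} :
    IsGreatest (A ∩ Set.Iic x) m ↔ m ∈ A ∧ ∀ a ∈ A, a ≤ x ↔ a ≤ m := by
  constructor
  · rintro ⟨⟨hmA, hmx⟩, hub⟩
    exact ⟨hmA, fun a ha => ⟨fun hax => hub ⟨ha, hax⟩, fun ham => ham.trans hmx⟩⟩
  · rintro ⟨hmA, hm⟩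
    exact ⟨⟨hmA, (hm m hmA).2 le_rfl⟩, fun a ha => (hm a ha.1).1 ha.2⟩

theorem isGreatest_inter_Iic_of_retraction {hAU : A ⊆ U} {p : U →o A}
    (hret : Function.LeftInverse p (Set.inclusion hAU)) (hle : ∀ u, (p u : α) ≤ u) (u : U) :
    IsGreatest (A ∩ Set.Iic ↑u) (p u : α) := by
  refine ⟨⟨(p u).2, hle u⟩, fun a ⟨(ha : a ∈ A), (hau : a ≤ u)⟩ => ?_⟩
  have hmono : p (Set.inclusion hAU ⟨a, ha⟩) ≤ p u := p.monotone hau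
  rwa [hret] at hmono

theorem exists_retraction_of_isGreatest_inter_Iic (hAU : A ⊆ U)
    (hU : ∀ x ∈ U, ∃ m, IsGreatest (A ∩ Set.Iic x) m) :
    ∃ p : U →o A, Function.LeftInverse p (Set.inclusion hAU) ∧ ∀ u, (p u : α) ≤ u := by
  -- Greatest elements are not unique in a preorder: on `A`, choose `u` itself to get a retraction.
  have hfix (u : U) : ∃ m : A, IsGreatest (A ∩ Set.Iic ↑u) (m : α) ∧ (↑u ∈ A → (m : α) = u) := by
    by_cases hu : ↑u ∈ A
    · exact ⟨⟨u, hu⟩, ⟨⟨hu, le_rfl⟩, fun _ ha => ha.2⟩, fun _ => rfl⟩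
    · obtain ⟨m, hm⟩ := hU u u.2
      exact ⟨⟨m, hm.1.1⟩, hm, fun hu' => absurd hu' hu⟩
  choose p hp hpA using hfix
  have hle (u : U) : (p u : α) ≤ u := (hp u).1.2
  have hmono : Monotone p := fun u v huv => (hp v).2 ⟨(p u).2, (hle u).trans huv⟩
  exact ⟨⟨p, hmono⟩, fun a => Subtype.ext (hpA _ a.2), hle⟩

/-- The inclusion of the sub-preorder `A` of `α` is a Dwyer morphism. This is `PreIsDwyer` for an
arbitrary preorder, with the retraction bundled as an order homomorphism `U →o A`; fullness is
automatic since `A` carries the induced order. -/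
def IsDwyerInclusion (A : Set α) : Prop :=
  IsLowerSet A ∧ ∃ (U : Set α) (hAU : A ⊆ U), IsUpperSet U ∧
    ∃ p : U →o A, Function.LeftInverse p (Set.inclusion hAU) ∧ ∀ u, (p u : α) ≤ u

theorem isDwyerInclusion_iff_exists_isGreatest :
    IsDwyerInclusion A ↔
      IsLowerSet A ∧ ∀ x ∈ upperClosure A, ∃ m, IsGreatest (A ∩ Set.Iic x) m := by
  refine and_congr_right fun _ => ⟨?_, fun h => ?_⟩
  · rintro ⟨U, hAU, hU, p, hret, hle⟩ x hx
    exact ⟨_, isGreatest_inter_Iic_of_retraction hret hle ⟨x, upperClosure_min hAU hU hx⟩⟩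
  · exact ⟨upperClosure A, subset_upperClosure, (upperClosure A).upper,
      exists_retraction_of_isGreatest_inter_Iic subset_upperClosure h⟩

end Preorder

theorem reflTransGen_subrel_iff {α : Type*} {r : α → α → Prop} {s : Set α}
    (hs : ∀ ⦃x y⦄, r x y → y ∈ s → x ∈ s) (a b : s) :
    Relation.ReflTransGen (Subrel r (· ∈ s)) a b ↔ Relation.ReflTransGen r (a : α) b := by
  refine ⟨fun h => h.lift Subtype.val (fun _ _ hr => hr) _ _, fun h => ?_⟩
  obtain ⟨b, hb⟩ := b
  dsimp only at h
  induction h with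
  | refl => exact .refl
  | tail _ hr ih => exact (ih (hs hr hb)).tail hr

section Reachability

variable {V : Type} (E : V → V → Prop) {A : Set V}

/-- The reachability preorder `Pre(V, E)`, through which results on preorders apply to digraphs. It
is not an instance, since `E` cannot be recovered from `V`. -/
abbrev reachabilityPreorder : Preorder V where
  le := Reaches E
  le_refl _ := .refl
  le_trans _ _ _ := .trans

theorem isLongCofib_iff_exists_isGreatest :
    letI := reachabilityPreorder E
    IsLongCofib E A ↔ IsLowerSet A ∧ ∀ x ∈ upperClosure A, ∃ m, IsGreatest (A ∩ Set.Iic x) m := by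
  let := reachabilityPreorder E
  have hlower : (∀ x, x ∉ A → ∀ a ∈ A, ¬ Reaches E x a) ↔ IsLowerSet A :=
    ⟨fun h a x hxa ha => by_contra fun hx => h x hx a ha hxa,
      fun h _ hx _ ha hxa => hx (h hxa ha)⟩
  simp only [isGreatest_inter_Iic_iff, mem_upperClosure]
  exact and_congr_left' hlower

theorem preIsDwyer_iff_isDwyerInclusion :
    letI := reachabilityPreorder E
    PreIsDwyer E A ↔ IsDwyerInclusion A := by
  let := reachabilityPreorder E
  constructor
  · rintro ⟨-, hlower, U, hAU, hupper, p, hmono, hret, hle⟩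
    exact ⟨fun a x hxa ha => hlower x a ha hxa, U, hAU, fun u x hux hu => hupper u hu x hux,
      ⟨p, hmono⟩, fun a => Subtype.ext (hret a a.2 (hAU a.2)), hle⟩
  · rintro ⟨hlower, U, hAU, hupper, p, hret, hle⟩
    have hfull (a b : A) : Reaches (fun u v : A => E u v) a b ↔ Reaches E a b :=
      reflTransGen_subrel_iff (fun _ _ hxy => hlower (.single hxy)) a b
    exact ⟨hfull, fun x a ha hxa => hlower hxa ha, U, hAU,
      fun u hu x hux => hupper hux hu, p, p.monotone,
      fun a ha _ => congrArg Subtype.val (hret ⟨a, ha⟩), hle⟩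

end Reachability

/-- An induced subgraph inclusion of directed graphs `A ↪ X` is a long cofibration if and
only if the induced inclusion of reachability preorders `Pre(A) → Pre(X)` is a Dwyer
morphism. -/
theorem isLongCofib_iff_preIsDwyer {V : Type} (E : V → V → Prop) (A : Set V) :
    IsLongCofib E A ↔ PreIsDwyer E A := by
  let := reachabilityPreorder E
  rw [isLongCofib_iff_exists_isGreatest, preIsDwyer_iff_isDwyerInclusion,
    isDwyerInclusion_iff_exists_isGreatest]
end

section
/- Let i : A → X be a long cofibration of directed graphs and f : A → Y any map of directed graphs, and form the pushout X ∪_A Y in the category of directed graphs. Then the canonical map j : Y → X ∪_A Y is a long cofibration. -/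
/-- The induced subgraph inclusion `A ↪ X` is a *long cofibration* if
(1) no vertex of `X` outside `A` reaches a vertex of `A`, and
(2) for each vertex `x` reachable from some vertex of `A` there is `π x ∈ A` with:
for every `a ∈ A`, `a` reaches `x` iff `a` reaches `π x`. -/
def IsLongCofibSet {V : Type} (E : V → V → Prop) (A : Set V) : Prop :=
  (∀ x, x ∉ A → ∀ a ∈ A, ¬ Reaches E x a) ∧
  (∀ x, (∃ a ∈ A, Reaches E a x) →
    ∃ π ∈ A, ∀ a ∈ A, (Reaches E a x ↔ Reaches E a π))

/-- A map of directed graphs `j : (Y, EY) → (P, EP)` is a long cofibration if it is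
(up to isomorphism) an induced subgraph inclusion (injective, and for `y ≠ y'` there is an
edge `j y → j y'` iff there is an edge `y → y'`) satisfying conditions (1) and (2) above
for its image. -/
def IsLongCofibMap {Y P : Type} (EY : Y → Y → Prop) (EP : P → P → Prop) (j : Y → P) : Prop :=
  Function.Injective j ∧
  (∀ y y', y ≠ y' → (EP (j y) (j y') ↔ EY y y')) ∧
  (∀ p, p ∉ Set.range j → ∀ y, ¬ Reaches EP p (j y)) ∧
  (∀ p, (∃ y, Reaches EP (j y) p) →
    ∃ y₀, ∀ y, (Reaches EP (j y) p ↔ Reaches EP (j y) (j y₀)))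

section Pushout

variable {VX VY : Type} (EX : VX → VX → Prop) (EY : VY → VY → Prop)
  (A : Set VX) (f : A → VY)

/-- The relation identifying each `a ∈ A ⊆ V(X)` with its image `f a ∈ V(Y)`. -/
def pushRel : (VX ⊕ VY) → (VX ⊕ VY) → Prop := fun p q =>
  ∃ a : A, p = Sum.inl (a : VX) ∧ q = Sum.inr (f a)

/-- The vertex set of the pushout `X ∪_A Y`: the pushout of sets `V(X) ⊔_{V(A)} V(Y)`. -/
def PushV : Type := Quot (pushRel A f)

/-- The edge relation of the pushout `X ∪_A Y`: there is an edge between two classes iff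
they have representatives joined by an edge of `X` or an edge of `Y`. -/
def PushE : PushV A f → PushV A f → Prop := fun p q =>
  (∃ u v : VX, EX u v ∧ Quot.mk _ (Sum.inl u) = p ∧ Quot.mk _ (Sum.inl v) = q) ∨
  (∃ u v : VY, EY u v ∧ Quot.mk _ (Sum.inr u) = p ∧ Quot.mk _ (Sum.inr v) = q)

/-- The canonical map `g : X → X ∪_A Y`. -/
def gMap : VX → PushV A f := fun x => Quot.mk _ (Sum.inl x)

/-- The canonical map `j : Y → X ∪_A Y`. -/
def jMap : VY → PushV A f := fun y => Quot.mk _ (Sum.inr y)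

end Pushout

theorem IsLongCofibSet.mem_of_edge {V : Type} {E : V → V → Prop} {A : Set V}
    (hA : IsLongCofibSet E A) ⦃u v : V⦄ (huv : E u v) (hv : v ∈ A) : u ∈ A := by
  by_contra hu
  exact hA.1 u hu v hv (.single huv)

namespace PushV

variable {VX VY : Type} {EX : VX → VX → Prop} {EY : VY → VY → Prop} {A : Set VX} {f : A → VY}

open Classical in
/-- The canonical representative of a vertex of the pushout: the one in `Y` if there is one, and
otherwise the unique one in `X`, which lies outside `A`. It serves to tell vertices apart. -/
noncomputable def normalForm : PushV A f → VX ⊕ VY :=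
  Quot.lift (Sum.elim (fun x => if hx : x ∈ A then Sum.inr (f ⟨x, hx⟩) else Sum.inl x) Sum.inr)
    (by rintro _ _ ⟨a, rfl, rfl⟩; simp)

theorem normalForm_jMap (y : VY) : normalForm (jMap A f y) = Sum.inr y :=
  rfl

theorem normalForm_gMap_of_notMem {x : VX} (hx : x ∉ A) :
    normalForm (gMap A f x) = Sum.inl x :=
  dif_neg hx

theorem gMap_coe (a : A) : gMap A f a = jMap A f (f a) :=
  Quot.sound ⟨a, rfl, rfl⟩

theorem jMap_injective : Function.Injective (jMap A f) := fun _ _ h =>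
  Sum.inr_injective (congrArg normalForm h)

theorem mem_of_gMap_eq_jMap {x : VX} {y : VY} (h : gMap A f x = jMap A f y) : x ∈ A := by
  by_contra hx
  have hnf := congrArg normalForm h
  rw [normalForm_gMap_of_notMem hx, normalForm_jMap] at hnf
  exact Sum.inl_ne_inr hnf

theorem gMap_eq_jMap_iff {x : VX} {y : VY} :
    gMap A f x = jMap A f y ↔ ∃ a : A, ↑a = x ∧ f a = y := by
  constructor
  · intro h
    lift x to A using mem_of_gMap_eq_jMap h
    exact ⟨x, rfl, jMap_injective ((gMap_coe x).symm.trans h)⟩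
  · rintro ⟨a, rfl, rfl⟩
    exact gMap_coe a

theorem gMap_eq_gMap_iff_of_notMem {u x : VX} (hx : x ∉ A) :
    gMap A f u = gMap A f x ↔ u = x := by
  refine ⟨fun h => ?_, congrArg _⟩
  have hu : u ∉ A := fun hu => hx (mem_of_gMap_eq_jMap (h.symm.trans (gMap_coe ⟨u, hu⟩)))
  have hnf := congrArg normalForm h
  rw [normalForm_gMap_of_notMem hu, normalForm_gMap_of_notMem hx] at hnf
  exact Sum.inl_injective hnf

theorem exists_gMap_eq_or_exists_jMap_eq (p : PushV A f) :
    (∃ x, gMap A f x = p) ∨ ∃ y, jMap A f y = p := by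
  obtain ⟨x | y, rfl⟩ := Quot.exists_rep p
  exacts [Or.inl ⟨x, rfl⟩, Or.inr ⟨y, rfl⟩]

theorem pushE_jMap_jMap_iff (hf : ∀ u v : A, EX u v → f u = f v ∨ EY (f u) (f v)) {y y' : VY}
    (hne : y ≠ y') : PushE EX EY A f (jMap A f y) (jMap A f y') ↔ EY y y' := by
  refine ⟨?_, fun h => Or.inr ⟨y, y', h, rfl, rfl⟩⟩
  rintro (⟨u, v, huv, hu, hv⟩ | ⟨u, v, huv, hu, hv⟩)
  · obtain ⟨a, rfl, rfl⟩ := gMap_eq_jMap_iff.1 hu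
    obtain ⟨b, rfl, rfl⟩ := gMap_eq_jMap_iff.1 hv
    exact (hf a b huv).resolve_left hne
  · rwa [← jMap_injective hu, ← jMap_injective hv]

theorem pushE_gMap_iff_of_notMem {p : PushV A f} {x : VX} (hx : x ∉ A) :
    PushE EX EY A f p (gMap A f x) ↔ ∃ u, gMap A f u = p ∧ EX u x := by
  constructor
  · rintro (⟨u, v, huv, hu, hv⟩ | ⟨_, _, _, _, hv⟩)
    · obtain rfl := (gMap_eq_gMap_iff_of_notMem hx).1 hv
      exact ⟨u, hu, huv⟩
    · exact absurd (mem_of_gMap_eq_jMap hv.symm) hx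
  · rintro ⟨u, hu, hux⟩
    exact Or.inl ⟨u, x, hux, hu, rfl⟩

theorem mem_range_jMap_of_pushE (hA : ∀ ⦃u v⦄, EX u v → v ∈ A → u ∈ A) {p q : PushV A f}
    (hpq : PushE EX EY A f p q) (hq : q ∈ Set.range (jMap A f)) : p ∈ Set.range (jMap A f) := by
  obtain ⟨y, rfl⟩ := hq
  rcases hpq with ⟨u, v, huv, rfl, hv⟩ | ⟨u, v, -, rfl, -⟩
  · exact ⟨f ⟨u, hA huv (mem_of_gMap_eq_jMap hv)⟩, (gMap_coe _).symm⟩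
  · exact ⟨u, rfl⟩

theorem mem_range_jMap_of_reaches (hA : ∀ ⦃u v⦄, EX u v → v ∈ A → u ∈ A) {p q : PushV A f}
    (hpq : Reaches (PushE EX EY A f) p q) (hq : q ∈ Set.range (jMap A f)) :
    p ∈ Set.range (jMap A f) := by
  induction hpq using Relation.ReflTransGen.head_induction_on with
  | refl => exact hq
  | head hpr _ hr => exact mem_range_jMap_of_pushE hA hpr hr

theorem reaches_gMap_gMap {u v : VX} (h : Reaches EX u v) :
    Reaches (PushE EX EY A f) (gMap A f u) (gMap A f v) :=
  h.lift (gMap A f) fun u v huv => Or.inl ⟨u, v, huv, rfl, rfl⟩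

theorem reaches_jMap_gMap_iff {y : VY} {x : VX} :
    Reaches (PushE EX EY A f) (jMap A f y) (gMap A f x) ↔
      ∃ a ∈ A, Reaches (PushE EX EY A f) (jMap A f y) (gMap A f a) ∧ Reaches EX a x := by
  refine ⟨fun h => ?_, fun ⟨a, _, hya, hax⟩ => hya.trans (reaches_gMap_gMap hax)⟩
  generalize hp : gMap A f x = p at h
  induction h generalizing x with
  | refl => exact ⟨x, mem_of_gMap_eq_jMap hp, hp ▸ .refl, .refl⟩
  | @tail q p hyq hqp ih =>
    subst hp
    by_cases hx : x ∈ A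
    · exact ⟨x, hx, hyq.tail hqp, .refl⟩
    · obtain ⟨u, hu, hux⟩ := (pushE_gMap_iff_of_notMem hx).1 hqp
      obtain ⟨a, ha, hya, hau⟩ := ih hu
      exact ⟨a, ha, hya, hau.tail hux⟩

theorem reaches_jMap_gMap_congr {x x' : VX} (h : ∀ a ∈ A, (Reaches EX a x ↔ Reaches EX a x'))
    (y : VY) : Reaches (PushE EX EY A f) (jMap A f y) (gMap A f x) ↔
      Reaches (PushE EX EY A f) (jMap A f y) (gMap A f x') := by
  rw [reaches_jMap_gMap_iff, reaches_jMap_gMap_iff (x := x')]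
  exact exists_congr fun a => and_congr_right fun ha => and_congr_right fun _ => h a ha

theorem exists_forall_reaches_jMap_iff
    (hA : ∀ x, (∃ a ∈ A, Reaches EX a x) → ∃ π ∈ A, ∀ a ∈ A, (Reaches EX a x ↔ Reaches EX a π))
    {p : PushV A f} (hp : ∃ y, Reaches (PushE EX EY A f) (jMap A f y) p) :
    ∃ y₀, ∀ y, (Reaches (PushE EX EY A f) (jMap A f y) p ↔
      Reaches (PushE EX EY A f) (jMap A f y) (jMap A f y₀)) := by
  obtain ⟨x, rfl⟩ | ⟨y₀, rfl⟩ := exists_gMap_eq_or_exists_jMap_eq p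
  · obtain ⟨y, hy⟩ := hp
    obtain ⟨a, ha, -, hax⟩ := reaches_jMap_gMap_iff.1 hy
    obtain ⟨π, hπA, hπ⟩ := hA x ⟨a, ha, hax⟩
    refine ⟨f ⟨π, hπA⟩, ?_⟩
    rw [← gMap_coe]
    exact reaches_jMap_gMap_congr hπ
  · exact ⟨y₀, fun _ => Iff.rfl⟩

end PushV

/-- Let `i : A → X` be a long cofibration of directed graphs and `f : A → Y` any map of
directed graphs, and form the pushout `X ∪_A Y` in the category of directed graphs.  Then
the canonical map `j : Y → X ∪_A Y` is a long cofibration. -/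
theorem pushout_inr_isLongCofib {VX VY : Type} (EX : VX → VX → Prop) (EY : VY → VY → Prop)
    (A : Set VX) (hA : IsLongCofibSet EX A) (f : A → VY)
    (hf : ∀ u v : A, EX u v → f u = f v ∨ EY (f u) (f v)) :
    IsLongCofibMap EY (PushE EX EY A f) (jMap A f) := by
  refine ⟨PushV.jMap_injective, fun _ _ => PushV.pushE_jMap_jMap_iff hf, ?_, ?_⟩
  · intro p hp y hpy
    exact hp (PushV.mem_range_jMap_of_reaches hA.mem_of_edge hpy ⟨y, rfl⟩)
  · exact fun p => PushV.exists_forall_reaches_jMap_iff hA.2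
end
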